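/- arXiv:2106.00807 — 8 statements merged into one kernel-verified Lean document; each statement's English description precedes it below -/
import Mathlib

section
/- Let A be a distributive nearlattice and let a₁, …, aₙ (n ≥ 1) be dual atoms of A such that the set {a₁, …, aₙ} has a greatest lower bound a* in A. Then a* is a boolean element of A, i.e., the principal upset [a*) is a boolean lattice. -/
/-!
Boolean elements are closed under finite meets, and a dual atom `a` is boolean because
`[a) = {a, 1}`. For the closure, let `c = a ∧ b` with `a`, `b` boolean and let `x ≥ c`. Take a
complement `y` of `x ∨ a` in `[a)` and a complement `z` of `x ∨ b` in `[b)`. Then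
`x ∨ y = x ∨ z = 1`, so `x ∨ (y ∧ z) = 1` by distributivity, while anything below both `x` and
`y ∧ z` lies below `(x ∨ a) ∧ y = a` and `(x ∨ b) ∧ z = b`; hence `y ∧ z` is a complement of `x`
in `[c)`.
-/

/-- In a join-semilattice, any two elements with a common lower bound have a
greatest lower bound. -/
def HasPartialMeets (A : Type*) [SemilatticeSup A] : Prop :=
  ∀ x y : A, (∃ z, z ≤ x ∧ z ≤ y) → ∃ m, IsGLB ({x, y} : Set A) m

/-- Every principal upset is distributive: for all `a ≤ x, y, z`,
`x ∧ (y ∨ z) = (x ∧ y) ∨ (x ∧ z)` (meets expressed via `IsGLB`). -/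
def UpsetDistrib (A : Type*) [SemilatticeSup A] : Prop :=
  ∀ a x y z m₁ m₂ m₃ : A, a ≤ x → a ≤ y → a ≤ z →
    IsGLB ({x, y ⊔ z} : Set A) m₁ → IsGLB ({x, y} : Set A) m₂ →
    IsGLB ({x, z} : Set A) m₃ → m₁ = m₂ ⊔ m₃

/-- A dual atom: `a ≠ 1` and `a ≤ x ≤ 1` implies `x = a` or `x = 1`. -/
def DualAtom {A : Type*} [SemilatticeSup A] [OrderTop A] (a : A) : Prop :=
  a ≠ ⊤ ∧ ∀ x, a ≤ x → x = a ∨ x = ⊤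

/-- A boolean element: the principal upset `[a)` is a boolean lattice, i.e. every
`x ≥ a` has a complement `y ≥ a` with `x ∨ y = 1` and `x ∧ y = a`. -/
def BooleanElt {A : Type*} [SemilatticeSup A] [OrderTop A] (a : A) : Prop :=
  ∀ x, a ≤ x → ∃ y, a ≤ y ∧ x ⊔ y = ⊤ ∧ IsGLB ({x, y} : Set A) a

section Preorder

variable {α : Type*} [Preorder α] {x y m : α}

theorem isGLB_pair_iff : IsGLB ({x, y} : Set α) m ↔ ∀ d, d ≤ m ↔ d ≤ x ∧ d ≤ y := by
  simp [isGLB_iff_le_iff]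

theorem isGLB_pair_of_le (h : x ≤ y) : IsGLB ({x, y} : Set α) x :=
  isGLB_pair_iff.2 fun _ => ⟨fun hd => ⟨hd, hd.trans h⟩, And.left⟩

theorem isGLB_insert_iff {s : Set α} (hs : IsGLB s y) :
    IsGLB (insert x s) m ↔ IsGLB ({x, y} : Set α) m :=
  isGLB_congr (by simp [lowerBounds_insert, hs.lowerBounds_eq])

end Preorder

section Nearlattice

variable {A : Type*} [SemilatticeSup A]

theorem HasPartialMeets.exists_isGLB_of_finite [OrderTop A] (hm : HasPartialMeets A) {s : Set A}
    (hs : s.Finite) (hb : BddBelow s) : ∃ m, IsGLB s m := by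
  induction s, hs using Set.Finite.induction_on with
  | empty => exact ⟨⊤, isGLB_empty⟩
  | @insert a s _ _ ih =>
    obtain ⟨c, hc⟩ := hb
    rw [lowerBounds_insert] at hc
    obtain ⟨m, hsm⟩ := ih ⟨c, hc.2⟩
    obtain ⟨n, hn⟩ := hm a m ⟨c, hc.1, hsm.2 hc.2⟩
    exact ⟨n, (isGLB_insert_iff hsm).2 hn⟩

theorem UpsetDistrib.isGLB_sup_left (hm : HasPartialMeets A) (hd : UpsetDistrib A)
    {c x y z m : A} (hcx : c ≤ x) (hcm : c ≤ m) (h : IsGLB ({y, z} : Set A) m) :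
    IsGLB ({x ⊔ y, x ⊔ z} : Set A) (x ⊔ m) := by
  -- `(x ∨ y) ∧ (x ∨ z) = x ∨ ((x ∨ y) ∧ z) = x ∨ (z ∧ x) ∨ (z ∧ y) = x ∨ (y ∧ z)`
  obtain ⟨hcy, hcz⟩ := (isGLB_pair_iff.1 h c).1 hcm
  have hcxy : c ≤ x ⊔ y := le_sup_of_le_left hcx
  obtain ⟨g, hg⟩ := hm (x ⊔ y) (x ⊔ z) ⟨c, hcxy, le_sup_of_le_left hcx⟩
  obtain ⟨p, hp⟩ := hm (x ⊔ y) z ⟨c, hcxy, hcz⟩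
  obtain ⟨k, hk⟩ := hm z x ⟨c, hcz, hcx⟩
  have hx : IsGLB ({x ⊔ y, x} : Set A) x := Set.pair_comm x _ ▸ isGLB_pair_of_le le_sup_left
  have hkx : k ≤ x := ((isGLB_pair_iff.1 hk k).1 le_rfl).2
  have g_eq : g = x ⊔ p := hd c (x ⊔ y) x z g x p hcxy hcx hcz hg hx hp
  have p_eq : p = k ⊔ m :=
    hd c z x y p k m hcz hcx hcy (Set.pair_comm _ z ▸ hp) hk (Set.pair_comm y z ▸ h)
  have g_eq_sup : g = x ⊔ m := by rw [g_eq, p_eq, ← sup_assoc, sup_eq_left.2 hkx]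
  exact g_eq_sup ▸ hg

variable [OrderTop A]

theorem UpsetDistrib.sup_eq_top_of_isGLB (hm : HasPartialMeets A) (hd : UpsetDistrib A)
    {c x y z m : A} (hcx : c ≤ x) (hcm : c ≤ m) (h : IsGLB ({y, z} : Set A) m)
    (hxy : x ⊔ y = ⊤) (hxz : x ⊔ z = ⊤) : x ⊔ m = ⊤ := by
  have hglb := hd.isGLB_sup_left hm hcx hcm h
  rw [hxy, hxz] at hglb
  exact hglb.unique (isGLB_pair_of_le le_rfl)

theorem booleanElt_top : BooleanElt (⊤ : A) := fun _ hx =>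
  ⟨⊤, le_rfl, sup_top_eq _, top_le_iff.1 hx ▸ isGLB_pair_of_le le_rfl⟩

theorem DualAtom.booleanElt {a : A} (ha : DualAtom a) : BooleanElt a := by
  intro x hx
  rcases ha.2 x hx with rfl | rfl
  · exact ⟨⊤, le_top, sup_top_eq x, isGLB_pair_of_le le_top⟩
  · exact ⟨a, le_rfl, top_sup_eq a, Set.pair_comm a _ ▸ isGLB_pair_of_le le_top⟩

theorem BooleanElt.of_isGLB_pair (hm : HasPartialMeets A) (hd : UpsetDistrib A) {a b c : A}
    (ha : BooleanElt a) (hb : BooleanElt b) (hc : IsGLB ({a, b} : Set A) c) : BooleanElt c := by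
  intro x hcx
  obtain ⟨hca, hcb⟩ := (isGLB_pair_iff.1 hc c).1 le_rfl
  obtain ⟨y, hay, hy_top, hy_glb⟩ := ha (x ⊔ a) le_sup_right
  obtain ⟨z, hbz, hz_top, hz_glb⟩ := hb (x ⊔ b) le_sup_right
  obtain ⟨m, hyz⟩ := hm y z ⟨c, hca.trans hay, hcb.trans hbz⟩
  have hcm : c ≤ m := (isGLB_pair_iff.1 hyz c).2 ⟨hca.trans hay, hcb.trans hbz⟩
  have hxy : x ⊔ y = ⊤ := by rwa [sup_assoc, sup_eq_right.2 hay] at hy_top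
  have hxz : x ⊔ z = ⊤ := by rwa [sup_assoc, sup_eq_right.2 hbz] at hz_top
  refine ⟨m, hcm, hd.sup_eq_top_of_isGLB hm hcx hcm hyz hxy hxz, isGLB_pair_iff.2 fun d => ?_⟩
  refine ⟨fun hdc => ⟨hdc.trans hcx, hdc.trans hcm⟩, fun ⟨hdx, hdm⟩ => ?_⟩
  obtain ⟨hdy, hdz⟩ := (isGLB_pair_iff.1 hyz d).1 hdm
  have hda : d ≤ a := (isGLB_pair_iff.1 hy_glb d).2 ⟨le_sup_of_le_left hdx, hdy⟩
  have hdb : d ≤ b := (isGLB_pair_iff.1 hz_glb d).2 ⟨le_sup_of_le_left hdx, hdz⟩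
  exact (isGLB_pair_iff.1 hc d).2 ⟨hda, hdb⟩

theorem meet_of_dual_atoms_is_boolean_general (hm : HasPartialMeets A) (hd : UpsetDistrib A)
    {s : Set A} (hs : s.Finite) (hbool : ∀ x ∈ s, BooleanElt x) {c : A} (hglb : IsGLB s c) :
    BooleanElt c := by
  induction s, hs using Set.Finite.induction_on generalizing c with
  | empty =>
    obtain rfl : c = ⊤ := hglb.unique isGLB_empty
    exact booleanElt_top
  | @insert a s _ hs ih =>
    obtain ⟨ha, hbool_s⟩ := Set.forall_mem_insert.1 hbool
    obtain ⟨m, hsm⟩ :=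
      hm.exists_isGLB_of_finite hs (hglb.bddBelow.mono (Set.subset_insert a s))
    exact ha.of_isGLB_pair hm hd (ih hbool_s hsm) ((isGLB_insert_iff hsm).1 hglb)

end Nearlattice

/-- if finitely many (at least one) dual atoms of a distributive
nearlattice have a greatest lower bound `a*`, then `a*` is a boolean element. -/
theorem meet_of_dual_atoms_is_boolean {A : Type*} [SemilatticeSup A] [OrderTop A]
    (hm : HasPartialMeets A) (hd : UpsetDistrib A)
    (S : Finset A) (hS : S.Nonempty) (hat : ∀ x ∈ S, DualAtom x)
    (aStar : A) (hglb : IsGLB (S : Set A) aStar) :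
    BooleanElt aStar :=
  meet_of_dual_atoms_is_boolean_general hm hd S.finite_toSet
    (fun x hx => (hat x hx).booleanElt) hglb
end

section
/- Let A be a distributive nearlattice and a, b ∈ A. Then X_{a∨b} = X_a ∩ X_b. Moreover, if the meet a ∧ b exists in A, then X_{a∧b} = X_a ∪ X_b. -/
/-- `X_a`: the set of dual atoms above `a`. -/
def Xset {A : Type*} [SemilatticeSup A] [OrderTop A] (a : A) : Set A :=
  {x | DualAtom x ∧ a ≤ x}

theorem dualAtom_iff_isCoatom {A : Type*} [SemilatticeSup A] [OrderTop A] {x : A} :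
    DualAtom x ↔ IsCoatom x := by
  refine and_congr_right fun _ => forall_congr' fun y => ?_
  rw [lt_iff_le_and_ne', and_imp, or_iff_not_imp_left]

namespace UpsetDistrib

variable {A : Type*} [SemilatticeSup A] {a b m x : A}

/-- The cut rule of distributive lattices: `a = a ∧ (x ∨ b) = (a ∧ x) ∨ (a ∧ b) ≤ x`. -/
theorem le_of_isGLB_le_of_le_sup (hd : UpsetDistrib A) (hm : HasPartialMeets A)
    (hab : IsGLB {a, b} m) (hmx : m ≤ x) (hax : a ≤ x ⊔ b) : a ≤ x := by
  have hma : m ≤ a := hab.1 (Set.mem_insert a {b})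
  have hmb : m ≤ b := hab.1 (Set.mem_insert_of_mem a rfl)
  obtain ⟨n, hn⟩ := hm a x ⟨m, hma, hmx⟩
  have hnx : n ≤ x := hn.1 (Set.mem_insert_of_mem a rfl)
  have ha : IsGLB {a, x ⊔ b} a := IsLeast.isGLB ⟨Set.mem_insert a _, by simpa using hax⟩
  calc
    a = n ⊔ m := hd m a x b a n m hma hmx hmb ha hn hab
    _ ≤ x := sup_le hnx hmx

theorem le_or_le_of_isCoatom [OrderTop A] (hd : UpsetDistrib A) (hm : HasPartialMeets A)
    (hx : IsCoatom x) (hab : IsGLB {a, b} m) (hmx : m ≤ x) : a ≤ x ∨ b ≤ x := by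
  refine or_iff_not_imp_right.mpr fun hbx => ?_
  have hxb : x ⊔ b = ⊤ := (hx.not_le_iff_codisjoint.mp hbx).eq_top
  exact hd.le_of_isGLB_le_of_le_sup hm hab hmx (hxb ▸ le_top)

end UpsetDistrib

section Xset

variable {A : Type*} [SemilatticeSup A] [OrderTop A] {a b m : A}

theorem Xset_antitone : Antitone (Xset : A → Set A) :=
  fun _ _ hab _ hx => ⟨hx.1, hab.trans hx.2⟩

theorem Xset_sup (a b : A) : Xset (a ⊔ b) = Xset a ∩ Xset b :=
  Set.ext fun _ => (and_congr_right' sup_le_iff).trans and_and_left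

theorem Xset_eq_union_of_isGLB (hm : HasPartialMeets A) (hd : UpsetDistrib A)
    (hab : IsGLB {a, b} m) : Xset m = Xset a ∪ Xset b := by
  apply Set.Subset.antisymm
  · rintro x ⟨hx, hmx⟩
    exact (hd.le_or_le_of_isCoatom hm (dualAtom_iff_isCoatom.mp hx) hab hmx).imp
      (And.intro hx) (And.intro hx)
  · exact Set.union_subset (Xset_antitone (hab.1 (Set.mem_insert a {b})))
      (Xset_antitone (hab.1 (Set.mem_insert_of_mem a rfl)))

end Xset

/-- `X_{a∨b} = X_a ∩ X_b`, and if `a ∧ b` exists then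
`X_{a∧b} = X_a ∪ X_b`. -/
theorem Xset_sup_and_inf {A : Type*} [SemilatticeSup A] [OrderTop A]
    (hm : HasPartialMeets A) (hd : UpsetDistrib A) (a b : A) :
    Xset (a ⊔ b) = Xset a ∩ Xset b ∧
      ∀ m : A, IsGLB ({a, b} : Set A) m → Xset m = Xset a ∪ Xset b :=
  ⟨Xset_sup a b, fun _ hab => Xset_eq_union_of_isGLB hm hd hab⟩
end

section
/- Let A be a finite distributive nearlattice. The following are equivalent: (1) the set At(A) of dual atoms has a greatest lower bound in A; (2) there exists a ∈ A such that D(A) = (a], the principal downset of a; (3) D(A) ≠ ∅. -/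
/-- `a^⊤ = {x : a ∨ x = 1}`. -/
def topOf {A : Type*} [SemilatticeSup A] [OrderTop A] (a : A) : Set A :=
  {x | a ⊔ x = ⊤}

/-- `a` is dense if `a^⊤ = {1}`. -/
def DenseElt {A : Type*} [SemilatticeSup A] [OrderTop A] (a : A) : Prop :=
  topOf a = {⊤}

/-!
An element is dense exactly when it lies below every dual atom: if `b` is not below a dual atom `d`
then `b ∨ d = 1` with `d ≠ 1`, and conversely an `x ≠ 1` with `b ∨ x = 1` lies below some dual
atom `d`, and then `b ≰ d`. So the dense elements are the lower bounds of the dual atoms. These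
form a join-closed set, which under the ascending chain condition has a greatest element as soon as
it is nonempty.
-/

section Bounds

variable {α : Type*}

theorem lowerBounds_eq_Iic_iff [Preorder α] {s : Set α} {a : α} :
    lowerBounds s = Set.Iic a ↔ IsGLB s a :=
  ⟨fun h => isGLB_iff_le_iff.mpr fun b => (Set.ext_iff.mp h b).symm, IsGLB.lowerBounds_eq⟩

theorem exists_isGreatest_of_directedOn [Preorder α] [WellFoundedGT α] {s : Set α}
    (hs : DirectedOn (· ≤ ·) s) (hne : s.Nonempty) : ∃ a, IsGreatest s a := by
  obtain ⟨a, ha⟩ := exists_maximal_of_wellFoundedGT (· ∈ s) hne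
  exact ⟨a, ha.prop, hs.is_top_of_is_max ha.prop fun _ hb hab => ha.le_of_ge hb hab⟩

theorem directedOn_lowerBounds [SemilatticeSup α] (s : Set α) :
    DirectedOn (· ≤ ·) (lowerBounds s) :=
  directedOn_of_sup_mem fun _ _ ha hb _ hx => sup_le (ha hx) (hb hx)

theorem exists_isGLB_of_bddBelow [SemilatticeSup α] [WellFoundedGT α] {s : Set α}
    (hs : BddBelow s) : ∃ a, IsGLB s a :=
  exists_isGreatest_of_directedOn (directedOn_lowerBounds s) hs

end Bounds

section Dense

variable {A : Type*} [SemilatticeSup A] [OrderTop A] {a b c : A}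

theorem dualAtom_iff_isCoatom_s6 : DualAtom a ↔ IsCoatom a :=
  ⟨fun h => ⟨h.1, fun x hx => (h.2 x hx.le).resolve_left hx.ne'⟩,
    fun h => ⟨h.ne_top, fun _ hx => (h.le_iff.mp hx).symm⟩⟩

theorem denseElt_iff_codisjoint_imp : DenseElt b ↔ ∀ x, Codisjoint b x → x = ⊤ := by
  have top_mem : ⊤ ∈ topOf b := sup_top_eq b
  simp only [DenseElt, Set.eq_singleton_iff_unique_mem, top_mem, true_and, codisjoint_iff]
  rfl

theorem DenseElt.le_of_isCoatom (hb : DenseElt b) (ha : IsCoatom a) : b ≤ a := by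
  by_contra hba
  have hcod : Codisjoint b a := (ha.not_le_iff_codisjoint.mp hba).symm
  exact ha.ne_top (denseElt_iff_codisjoint_imp.mp hb a hcod)

theorem denseElt_iff_forall_isCoatom_le [IsCoatomic A] :
    DenseElt b ↔ ∀ a, IsCoatom a → b ≤ a := by
  refine ⟨fun hb a ha => hb.le_of_isCoatom ha, fun hb => ?_⟩
  refine denseElt_iff_codisjoint_imp.mpr fun x hx => ?_
  rcases eq_top_or_exists_le_coatom x with rfl | ⟨a, ha, hxa⟩
  · rfl
  · exact absurd (hx.top_le.trans (sup_le (hb a ha) hxa)) ha.lt_top.not_ge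

theorem setOf_denseElt_eq_lowerBounds [IsCoatomic A] :
    {b : A | DenseElt b} = lowerBounds {x : A | DualAtom x} := by
  ext b
  simp only [dualAtom_iff_isCoatom_s6]
  exact denseElt_iff_forall_isCoatom_le

theorem setOf_denseElt_eq_Iic_iff [IsCoatomic A] :
    {b : A | DenseElt b} = Set.Iic c ↔ IsGLB {x : A | DualAtom x} c := by
  rw [setOf_denseElt_eq_lowerBounds, lowerBounds_eq_Iic_iff]

theorem DenseElt.exists_isGLB_dualAtom [WellFoundedGT A] (hb : DenseElt b) :
    ∃ c : A, IsGLB {x : A | DualAtom x} c :=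
  exists_isGLB_of_bddBelow ⟨b, setOf_denseElt_eq_lowerBounds.subset hb⟩

end Dense

theorem dense_elements_iff_general {A : Type*} [SemilatticeSup A] [OrderTop A] [WellFoundedGT A] :
    ((∃ c : A, IsGLB {x : A | DualAtom x} c) ↔
        (∃ a : A, {b : A | DenseElt b} = Set.Iic a)) ∧
    ((∃ a : A, {b : A | DenseElt b} = Set.Iic a) ↔ (∃ b : A, DenseElt b)) := by
  simp only [setOf_denseElt_eq_Iic_iff, true_and]
  constructor
  · rintro ⟨c, hc⟩
    exact ⟨c, (setOf_denseElt_eq_Iic_iff.mpr hc).superset Set.self_mem_Iic⟩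
  · rintro ⟨b, hb⟩
    exact hb.exists_isGLB_dualAtom

/-- in a finite distributive nearlattice the following are
equivalent: (1) the dual atoms have a greatest lower bound; (2) the dense
elements form a principal downset `(a]`; (3) there is a dense element. -/
theorem dense_elements_iff {A : Type*} [SemilatticeSup A] [OrderTop A] [Finite A]
    (hm : HasPartialMeets A) (hd : UpsetDistrib A) :
    ((∃ c : A, IsGLB {x : A | DualAtom x} c) ↔
        (∃ a : A, {b : A | DenseElt b} = Set.Iic a)) ∧
    ((∃ a : A, {b : A | DenseElt b} = Set.Iic a) ↔ (∃ b : A, DenseElt b)) :=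
  dense_elements_iff_general
end

section
/- Let A be a distributive nearlattice. Then C(A) is a nearlattice subalgebra of A: 1 ∈ C(A); if a, b ∈ C(A) then a ∨ b ∈ C(A); and if a, b ∈ C(A) and the meet a ∧ b exists in A, then a ∧ b ∈ C(A). -/
/-- A complemented element: the filter generated by `[a) ∪ a^⊤` is all of `A`;
concretely, for every `x` there are `u, v` with `a ≤ u`, `a ∨ v = 1`, such that
`u ∧ v` exists and `u ∧ v ≤ x`. -/
def ComplElt {A : Type*} [SemilatticeSup A] [OrderTop A] (a : A) : Prop :=
  ∀ x : A, ∃ u v m : A, a ≤ u ∧ a ⊔ v = ⊤ ∧ IsGLB ({u, v} : Set A) m ∧ m ≤ x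

/-!
Every upset `[x)` is a bounded distributive lattice, and `a` is complemented exactly when its image
under the projection `a ↦ a ∨ x` onto `[x)` has a complement there, for every `x`. These projections
preserve joins and all existing meets: if `m = a ∧ b`, then `(a ∨ x) ∧ (b ∨ x) = m ∨ x` is an
instance of distributivity in the lattice `[m)`, although `m` and `x` need not have a common lower
bound. So the claim reduces to the fact that complemented elements of a bounded distributive
lattice form a sublattice.
-/

theorem mem_lowerBounds_pair {α : Type*} [Preorder α] {a b c : α} :
    c ∈ lowerBounds {a, b} ↔ c ≤ a ∧ c ≤ b := by
  simp only [mem_lowerBounds, Set.forall_mem_insert, Set.mem_singleton_iff, forall_eq]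

theorem disjoint_iff_isGLB_pair_bot {α : Type*} [PartialOrder α] [OrderBot α] {a b : α} :
    Disjoint a b ↔ IsGLB {a, b} ⊥ := by
  simp only [Disjoint, IsGLB, IsGreatest, mem_upperBounds, mem_lowerBounds_pair, bot_le, and_imp,
    true_and, and_self]

section SemilatticeSup

variable {A : Type*} [SemilatticeSup A]

theorem isGLB_image_coe_Ici {c : A} {s : Set (Set.Ici c)} {m : Set.Ici c} :
    IsGLB ((↑) '' s : Set A) m ↔ IsGLB s m := by
  refine ⟨fun h => .of_image (f := Subtype.val) Iff.rfl h, fun h => ?_⟩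
  refine ⟨(Subtype.mono_coe _).mem_lowerBounds_image h.1, fun w hw => ?_⟩
  have lower_sup : (⟨w ⊔ c, le_sup_right⟩ : Set.Ici c) ∈ lowerBounds s := fun y hy =>
    sup_le (hw (Set.mem_image_of_mem _ hy)) y.2
  exact le_sup_left.trans (h.2 lower_sup)

theorem isGLB_pair_coe_Ici {c : A} {y z m : Set.Ici c} :
    IsGLB ({↑y, ↑z} : Set A) m ↔ IsGLB {y, z} m := by
  rw [← isGLB_image_coe_Ici, Set.image_pair]

/-- The projection `a ↦ a ∨ x` of a join-semilattice onto its principal upset `[x)`. -/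
def toIci (x a : A) : Set.Ici x :=
  ⟨a ⊔ x, Set.mem_Ici.2 le_sup_right⟩

theorem coe_toIci (x a : A) : (toIci x a : A) = a ⊔ x :=
  rfl

theorem toIci_of_le {x a : A} (h : a ≤ x) : toIci x a = ⊥ :=
  Subtype.ext (sup_of_le_right h)

theorem toIci_sup (x a b : A) : toIci x (a ⊔ b) = toIci x a ⊔ toIci x b :=
  Subtype.ext (sup_sup_distrib_right a b x)

theorem monotone_toIci (x : A) : Monotone (toIci x) :=
  fun _ _ h => sup_le_sup_right h x

theorem isGLB_pair_toIci_iff_of_le {c a b m : A} (ha : c ≤ a) (hb : c ≤ b) (hm : c ≤ m) :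
    IsGLB {toIci c a, toIci c b} (toIci c m) ↔ IsGLB {a, b} m := by
  simp only [← isGLB_pair_coe_Ici, coe_toIci, sup_of_le_left, ha, hb, hm]

theorem HasPartialMeets.exists_isGLB_pair_Ici (hm : HasPartialMeets A) {c : A} (y z : Set.Ici c) :
    ∃ m, IsGLB {y, z} m := by
  obtain ⟨m, h⟩ := hm y z ⟨c, y.2, z.2⟩
  have c_le : c ≤ m := h.2 (mem_lowerBounds_pair.2 ⟨y.2, z.2⟩)
  exact ⟨⟨m, c_le⟩, isGLB_pair_coe_Ici.1 h⟩

/-- The lattice structure on a principal upset of a nearlattice; the order and the joins are the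
inherited ones, the meets are chosen greatest lower bounds. -/
noncomputable abbrev HasPartialMeets.latticeIci (hm : HasPartialMeets A) (c : A) :
    Lattice (Set.Ici c) :=
  { (inferInstance : SemilatticeSup (Set.Ici c)),
    SemilatticeInf.ofIsGLB (fun y z => (hm.exists_isGLB_pair_Ici y z).choose)
      (fun y z => (hm.exists_isGLB_pair_Ici y z).choose_spec) with }

/-- The distributive lattice structure on a principal upset of a distributive nearlattice. -/
noncomputable abbrev UpsetDistrib.distribLatticeIci (hm : HasPartialMeets A)
    (hd : UpsetDistrib A) (c : A) : DistribLattice (Set.Ici c) :=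
  letI := hm.latticeIci c
  .ofInfSupLe fun x y z => le_of_eq <| Subtype.ext <|
    hd c x y z _ _ _ x.2 y.2 z.2 (isGLB_pair_coe_Ici (z := y ⊔ z).2 isGLB_pair)
      (isGLB_pair_coe_Ici.2 isGLB_pair) (isGLB_pair_coe_Ici.2 isGLB_pair)

theorem UpsetDistrib.isGLB_pair_sup_right (hm : HasPartialMeets A) (hd : UpsetDistrib A)
    {a b m : A} (h : IsGLB {a, b} m) (x : A) : IsGLB {a ⊔ x, b ⊔ x} (m ⊔ x) := by
  let := hd.distribLatticeIci hm m
  obtain ⟨hma, hmb⟩ := mem_lowerBounds_pair.1 h.1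
  have inf_toIci : toIci m a ⊓ toIci m b = toIci m m :=
    isGLB_pair.unique ((isGLB_pair_toIci_iff_of_le hma hmb le_rfl).2 h)
  have inf_toIci_sup : toIci m (a ⊔ x) ⊓ toIci m (b ⊔ x) = toIci m (m ⊔ x) := by
    simp only [toIci_sup, ← sup_inf_right, inf_toIci]
  rw [← isGLB_pair_toIci_iff_of_le (le_sup_of_le_left hma) (le_sup_of_le_left hmb) le_sup_left,
    ← inf_toIci_sup]
  exact isGLB_pair

theorem UpsetDistrib.isGLB_pair_toIci (hm : HasPartialMeets A) (hd : UpsetDistrib A)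
    {a b m : A} (h : IsGLB {a, b} m) (x : A) : IsGLB {toIci x a, toIci x b} (toIci x m) :=
  isGLB_pair_coe_Ici.1 (hd.isGLB_pair_sup_right hm h x)

end SemilatticeSup

section OrderTop

variable {A : Type*} [SemilatticeSup A] [OrderTop A]

theorem toIci_top (x : A) : toIci x ⊤ = ⊤ :=
  Subtype.ext (top_sup_eq x)

theorem codisjoint_toIci_iff {x a : A} {v : Set.Ici x} :
    Codisjoint (toIci x a) v ↔ a ⊔ v = ⊤ := by
  rw [Set.Ici.codisjoint_iff, codisjoint_iff, coe_toIci, sup_assoc, sup_of_le_right v.2]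

theorem complElt_iff_forall_exists_isCompl (hm : HasPartialMeets A) (hd : UpsetDistrib A) {a : A} :
    ComplElt a ↔ ∀ x, ∃ v, IsCompl (toIci x a) v := by
  refine ⟨fun ha x => ?_, fun ha x => ?_⟩
  · obtain ⟨u, v, m, hau, hav, h, hmx⟩ := ha x
    have disjoint : Disjoint (toIci x u) (toIci x v) := by
      rw [disjoint_iff_isGLB_pair_bot, ← toIci_of_le hmx]
      exact hd.isGLB_pair_toIci hm h x
    have codisjoint : Codisjoint (toIci x a) (toIci x v) := by
      rw [codisjoint_iff, ← toIci_sup, hav, toIci_top]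
    exact ⟨toIci x v, disjoint.mono_left (monotone_toIci x hau), codisjoint⟩
  · obtain ⟨v, hv⟩ := ha x
    have isGLB : IsGLB {(toIci x a : A), (v : A)} x :=
      isGLB_pair_coe_Ici.2 (disjoint_iff_isGLB_pair_bot.1 hv.disjoint)
    exact ⟨a ⊔ x, v, x, le_sup_left, codisjoint_toIci_iff.1 hv.codisjoint, isGLB, le_rfl⟩

end OrderTop

/-- in a distributive nearlattice, the complemented elements form a
nearlattice subalgebra: they contain `1`, are closed under `∨`, and closed under
existing meets. -/
theorem complemented_elements_subalgebra {A : Type*} [SemilatticeSup A]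
    [OrderTop A] (hm : HasPartialMeets A) (hd : UpsetDistrib A) :
    ComplElt (⊤ : A) ∧
      (∀ a b : A, ComplElt a → ComplElt b → ComplElt (a ⊔ b)) ∧
      (∀ a b m : A, ComplElt a → ComplElt b →
        IsGLB ({a, b} : Set A) m → ComplElt m) := by
  simp only [complElt_iff_forall_exists_isCompl hm hd]
  refine ⟨fun x => ?_, fun a b ha hb x => ?_, fun a b m ha hb h x => ?_⟩
  · let := hd.distribLatticeIci hm x
    rw [toIci_top]
    exact isComplemented_top
  · let := hd.distribLatticeIci hm x
    rw [toIci_sup]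
    exact IsComplemented.sup (ha x) (hb x)
  · let := hd.distribLatticeIci hm x
    rw [(hd.isGLB_pair_toIci hm h x).unique isGLB_pair]
    exact IsComplemented.inf (ha x) (hb x)
end

section
/- Let A be a finite distributive nearlattice. Then every element of A is boolean (equivalently, A is a semi-boolean algebra) if and only if B(A) = C(A). -/
/-!
If `x` is complemented, `a ≤ x`, and `v` satisfies `x ⊔ v = ⊤` and `x ⊓ v ≤ a`, then distributivity
gives `x ⊓ (v ⊔ a) = a`, so `v ⊔ a` is a complement of `x` in `[a)`. Hence `a` is boolean as soon
as every `x > a` is complemented. If boolean elements are complemented, descending induction from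
`⊤` then makes every element boolean. Conversely, if `x` is boolean, a complement of `a ⊔ x` in
`[x)` exhibits `x` as a meet of an element of `[a)` and an element of `a^⊤`.
-/

section Preorder

variable {A : Type*} [Preorder A] {x y u v w m : A}

theorem isGLB_pair_left_of_le (hxy : x ≤ y) : IsGLB ({x, y} : Set A) x :=
  IsLeast.isGLB ⟨Set.mem_insert x {y}, by simp [hxy]⟩

theorem isGLB_pair_right_of_le (hyx : y ≤ x) : IsGLB ({x, y} : Set A) y :=
  Set.pair_comm y x ▸ isGLB_pair_left_of_le hyx

theorem isGLB_pair_of_le_of_le (hm : IsGLB ({u, v} : Set A) m) (hmw : m ≤ w) (hwu : w ≤ u) :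
    IsGLB ({w, v} : Set A) m := by
  simp only [isGLB_iff_le_iff, lowerBounds_insert, lowerBounds_singleton, Set.mem_inter_iff,
    Set.mem_Iic] at hm ⊢
  exact fun z ↦ ⟨fun hz ↦ ⟨hz.trans hmw, ((hm z).1 hz).2⟩,
    fun hz ↦ (hm z).2 ⟨hz.1.trans hwu, hz.2⟩⟩

end Preorder

section SemilatticeSup

variable {A : Type*} [SemilatticeSup A]

theorem UpsetDistrib.isGLB_pair_sup {a x v m : A} (hd : UpsetDistrib A)
    (hm : IsGLB ({x, v} : Set A) m) (hma : m ≤ a) (hax : a ≤ x) :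
    IsGLB ({x, v ⊔ a} : Set A) a := by
  refine ⟨by simp [hax], fun w hw ↦ ?_⟩
  obtain ⟨hwx, hwva⟩ : w ≤ x ∧ w ≤ v ⊔ a := by simpa using hw
  have hmv : m ≤ v := hm.1 (by simp)
  have hmw : m ≤ w ⊔ a := le_sup_of_le_right hma
  -- A lower bound `w` need not meet `v`, but `w ⊔ a` does, and its meet with `v` is still `m`.
  have hmeet : IsGLB ({w ⊔ a, v} : Set A) m := isGLB_pair_of_le_of_le hm hmw (sup_le hwx hax)
  have hdistrib : w ⊔ a = m ⊔ a :=
    hd m (w ⊔ a) v a (w ⊔ a) m a hmw hmv hma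
      (isGLB_pair_left_of_le (sup_le hwva le_sup_right)) hmeet
      (isGLB_pair_right_of_le le_sup_right)
  calc
    w ≤ w ⊔ a := le_sup_left
    _ = m ⊔ a := hdistrib
    _ = a := sup_eq_right.2 hma

variable [OrderTop A]

theorem ComplElt.exists_compl_above {a x : A} (hd : UpsetDistrib A) (hx : ComplElt x)
    (hax : a ≤ x) : ∃ y, a ≤ y ∧ x ⊔ y = ⊤ ∧ IsGLB ({x, y} : Set A) a := by
  obtain ⟨u, v, m, hxu, hxv, hm, hma⟩ := hx a
  have hmeet : IsGLB ({x, v} : Set A) m := isGLB_pair_of_le_of_le hm (hma.trans hax) hxu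
  have hjoin : x ⊔ (v ⊔ a) = ⊤ := by rw [← sup_assoc, hxv, top_sup_eq]
  exact ⟨v ⊔ a, le_sup_right, hjoin, hd.isGLB_pair_sup hmeet hma hax⟩

theorem booleanElt_of_forall_gt_complElt {a : A} (hd : UpsetDistrib A)
    (h : ∀ x, a < x → ComplElt x) : BooleanElt a := by
  intro x hax
  obtain rfl | hlt := hax.eq_or_lt
  · exact ⟨⊤, le_top, sup_top_eq a, isGLB_pair_left_of_le le_top⟩
  · exact (h x hlt).exists_compl_above hd hax

theorem forall_booleanElt_of_booleanElt_imp_complElt [WellFoundedGT A] (hd : UpsetDistrib A)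
    (h : ∀ a : A, BooleanElt a → ComplElt a) (a : A) : BooleanElt a := by
  induction a using WellFoundedGT.induction with
  | ind a ih => exact booleanElt_of_forall_gt_complElt hd fun x hax ↦ h x (ih x hax)

theorem complElt_of_forall_booleanElt (h : ∀ x : A, BooleanElt x) (a : A) : ComplElt a := by
  intro x
  obtain ⟨y, hxy, hjoin, hmeet⟩ := h x (a ⊔ x) le_sup_right
  have hay : a ⊔ y = ⊤ := by rwa [sup_assoc, sup_eq_right.2 hxy] at hjoin
  exact ⟨a ⊔ x, y, x, le_sup_left, hay, hmeet, le_rfl⟩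

theorem semi_boolean_iff_boolean_eq_complemented_general [WellFoundedGT A]
    (hd : UpsetDistrib A) :
    (∀ a : A, BooleanElt a) ↔ {a : A | BooleanElt a} = {a : A | ComplElt a} := by
  constructor
  · intro h
    ext a
    exact iff_of_true (h a) (complElt_of_forall_booleanElt h a)
  · intro h
    exact forall_booleanElt_of_booleanElt_imp_complElt hd h.subset

end SemilatticeSup

/-- a finite distributive nearlattice is a semi-boolean algebra
(every element is boolean) iff its boolean and complemented elements coincide. -/
theorem semi_boolean_iff_boolean_eq_complemented {A : Type*} [SemilatticeSup A]
    [OrderTop A] [Finite A] (hm : HasPartialMeets A) (hd : UpsetDistrib A) :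
    (∀ a : A, BooleanElt a) ↔ {a : A | BooleanElt a} = {a : A | ComplElt a} := by
  exact semi_boolean_iff_boolean_eq_complemented_general hd
end

section
/- Let A be a distributive nearlattice, L a bounded distributive lattice, and e : A → L an injective N-homomorphism such that e[A] is finitely meet-dense in L. Then for every a ∈ A: (1) e[[a)] = [e(a)), i.e., {e(x) : x ∈ A, a ≤ x} = {u ∈ L : e(a) ≤ u}; (2) an element u ∈ L satisfies u ∨ e(a) = 1_L if and only if there exist n ≥ 1 and a₁, …, aₙ ∈ A with a ∨ aᵢ = 1 for each i and u = e(a₁) ∧ … ∧ e(aₙ) (equivalently, the filter of L generated by e[a^⊤] equals e(a)^⊤). -/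
/-! The map `e` is an order embedding that preserves every finite meet existing in `A`. If
`u = e b₁ ⊓ ⋯ ⊓ e bₙ` lies above `e a`, then all `bᵢ` lie above `a`, so they have a meet in `A`,
and `e` sends it to `u`. For the annihilator, distributivity of `L` makes `u ⊔ e a = ⊤` equivalent
to `e bᵢ ⊔ e a = ⊤` for all `i`, that is, to `a ⊔ bᵢ = ⊤` for all `i`. -/

theorem isGLB_insert_iff_isGLB_pair {P : Type*} [Preorder P] {s : Set P} {b k m : P}
    (hk : IsGLB s k) : IsGLB (insert b s) m ↔ IsGLB {b, k} m := by
  simp only [IsGLB, lowerBounds_insert, lowerBounds_singleton, hk.lowerBounds_eq]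

section

variable {A M : Type*} [SemilatticeSup A] {e : A → M}

theorem map_le_map_iff_of_injective_of_map_sup [SemilatticeSup M] (hinj : Function.Injective e)
    (hsup : ∀ a b : A, e (a ⊔ b) = e a ⊔ e b) {a b : A} : e a ≤ e b ↔ a ≤ b := by
  rw [← sup_eq_right, ← hsup, hinj.eq_iff, sup_eq_right]

variable [OrderTop A]

theorem HasPartialMeets.exists_isGLB_finset (hm : HasPartialMeets A) (s : Finset A)
    (hs : BddBelow (s : Set A)) : ∃ m, IsGLB (s : Set A) m := by
  classical
  induction s using Finset.induction_on with
  | empty => exact ⟨⊤, by simp⟩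
  | insert b s _ ih =>
    rw [Finset.coe_insert] at hs ⊢
    obtain ⟨a, ha⟩ := hs
    rw [lowerBounds_insert] at ha
    obtain ⟨k, hk⟩ := ih ⟨a, ha.2⟩
    obtain ⟨m, hbk⟩ := hm b k ⟨a, ha.1, hk.2 ha.2⟩
    exact ⟨m, (isGLB_insert_iff_isGLB_pair hk).mpr hbk⟩

theorem HasPartialMeets.map_eq_finset_inf_of_isGLB [SemilatticeInf M] [OrderTop M]
    (hm : HasPartialMeets A) (htop : e ⊤ = ⊤)
    (hinf : ∀ a b m : A, IsGLB {a, b} m → e m = e a ⊓ e b)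
    {s : Finset A} {m : A} (h : IsGLB (s : Set A) m) : e m = s.inf e := by
  classical
  induction s using Finset.induction_on generalizing m with
  | empty =>
    rw [Finset.coe_empty, isGLB_empty_iff] at h
    rw [Finset.inf_empty, h.eq_top, htop]
  | insert b s _ ih =>
    rw [Finset.coe_insert] at h
    obtain ⟨k, hk⟩ := hm.exists_isGLB_finset s ⟨m, fun c hc => h.1 (Set.mem_insert_of_mem b hc)⟩
    rw [Finset.inf_insert, hinf b k m ((isGLB_insert_iff_isGLB_pair hk).mp h), ih hk]

theorem codisjoint_map_iff_of_injective [SemilatticeSup M] [OrderTop M]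
    (hinj : Function.Injective e) (htop : e ⊤ = ⊤)
    (hsup : ∀ a b : A, e (a ⊔ b) = e a ⊔ e b) {a b : A} :
    Codisjoint (e a) (e b) ↔ Codisjoint a b := by
  rw [codisjoint_iff, codisjoint_iff, ← hsup, ← htop, hinj.eq_iff]

theorem HasPartialMeets.image_Ici_eq_Ici [Lattice M] [OrderTop M]
    (hm : HasPartialMeets A) (hinj : Function.Injective e) (htop : e ⊤ = ⊤)
    (hsup : ∀ a b : A, e (a ⊔ b) = e a ⊔ e b)
    (hinf : ∀ a b m : A, IsGLB {a, b} m → e m = e a ⊓ e b)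
    (hdense : ∀ u : M, ∃ s : Finset A, u = s.inf e) (a : A) :
    e '' Set.Ici a = Set.Ici (e a) := by
  have hle {x y : A} : e x ≤ e y ↔ x ≤ y := map_le_map_iff_of_injective_of_map_sup hinj hsup
  refine Set.Subset.antisymm (Set.image_subset_iff.mpr fun x hx => hle.mpr hx) fun u hu => ?_
  obtain ⟨s, rfl⟩ := hdense u
  have ha : a ∈ lowerBounds (s : Set A) := fun b hb => hle.mp (Finset.le_inf_iff.mp hu b hb)
  obtain ⟨m, hglb⟩ := hm.exists_isGLB_finset s ⟨a, ha⟩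
  exact ⟨m, hglb.2 ha, hm.map_eq_finset_inf_of_isGLB htop hinf hglb⟩

theorem finset_inf_map_sup_eq_top_iff [DistribLattice M] [OrderTop M]
    (hinj : Function.Injective e) (htop : e ⊤ = ⊤)
    (hsup : ∀ a b : A, e (a ⊔ b) = e a ⊔ e b) {s : Finset A} {a : A} :
    s.inf e ⊔ e a = ⊤ ↔ ∀ b ∈ s, a ⊔ b = ⊤ := by
  simp only [sup_comm (s.inf e), ← codisjoint_iff, Finset.codisjoint_inf_right,
    codisjoint_map_iff_of_injective hinj htop hsup]

theorem sup_map_eq_top_iff_exists_finset_inf [DistribLattice M] [OrderTop M]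
    (hinj : Function.Injective e) (htop : e ⊤ = ⊤) (hsup : ∀ a b : A, e (a ⊔ b) = e a ⊔ e b)
    (hdense : ∀ u : M, ∃ s : Finset A, s.Nonempty ∧ u = s.inf e) (a : A) (u : M) :
    u ⊔ e a = ⊤ ↔ ∃ s : Finset A, s.Nonempty ∧ (∀ b ∈ s, a ⊔ b = ⊤) ∧ u = s.inf e := by
  simp only [← finset_inf_map_sup_eq_top_iff hinj htop hsup]
  refine ⟨fun hu => ?_, fun ⟨_, _, hs_top, hu⟩ => hu ▸ hs_top⟩
  obtain ⟨s, hs, rfl⟩ := hdense u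
  exact ⟨s, hs, hu, rfl⟩

end

theorem free_extension_upset_and_annihilator_general {A L : Type*} [SemilatticeSup A]
    [OrderTop A] [DistribLattice L] [OrderTop L] (hm : HasPartialMeets A)
    (e : A → L) (hinj : Function.Injective e) (htop : e ⊤ = ⊤)
    (hsup : ∀ a b : A, e (a ⊔ b) = e a ⊔ e b)
    (hinf : ∀ a b m : A, IsGLB ({a, b} : Set A) m → e m = e a ⊓ e b)
    (hdense : ∀ u : L, ∃ s : Finset A, s.Nonempty ∧ u = s.inf e) :
    (∀ a : A, e '' Set.Ici a = Set.Ici (e a)) ∧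
      (∀ (a : A) (u : L), u ⊔ e a = ⊤ ↔
        ∃ s : Finset A, s.Nonempty ∧ (∀ b ∈ s, a ⊔ b = ⊤) ∧ u = s.inf e) :=
  ⟨hm.image_Ici_eq_Ici hinj htop hsup hinf fun u => (hdense u).imp fun _ => And.right,
    sup_map_eq_top_iff_exists_finset_inf hinj htop hsup hdense⟩

/-- let `A` be a distributive nearlattice, `L` a bounded
distributive lattice and `e : A → L` an injective N-homomorphism with `e[A]`
finitely meet-dense in `L`.  Then (1) `e[[a)] = [e(a))`, and (2) `u ∨ e(a) = 1`
iff `u` is a finite (nonempty) meet of images of elements of `a^⊤`. -/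
theorem free_extension_upset_and_annihilator {A L : Type*} [SemilatticeSup A]
    [OrderTop A] [DistribLattice L] [BoundedOrder L]
    (hm : HasPartialMeets A) (hd : UpsetDistrib A)
    (e : A → L) (hinj : Function.Injective e)
    (htop : e ⊤ = ⊤)
    (hsup : ∀ a b : A, e (a ⊔ b) = e a ⊔ e b)
    (hinf : ∀ a b m : A, IsGLB ({a, b} : Set A) m → e m = e a ⊓ e b)
    (hdense : ∀ u : L, ∃ s : Finset A, s.Nonempty ∧ u = s.inf e) :
    (∀ a : A, e '' Set.Ici a = Set.Ici (e a)) ∧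
      (∀ (a : A) (u : L), u ⊔ e a = ⊤ ↔
        ∃ s : Finset A, s.Nonempty ∧ (∀ b ∈ s, a ⊔ b = ⊤) ∧ u = s.inf e) :=
  free_extension_upset_and_annihilator_general hm e hinj htop hsup hinf hdense
end

section
/- Let A be a finite distributive nearlattice. Then for every a ∈ A, a is the greatest lower bound in A of the set {x ∈ Irr(A) : a ≤ x} of irreducible elements above a (for a = 1 this set is empty and its greatest lower bound is 1). -/
/-- A meet-irreducible element: `a ≠ 1` and whenever `x ∧ y` exists with
`a = x ∧ y`, then `a = x` or `a = y`. -/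
def IrrElt {A : Type*} [SemilatticeSup A] [OrderTop A] (a : A) : Prop :=
  a ≠ ⊤ ∧ ∀ x y m : A, IsGLB ({x, y} : Set A) m → a = m → a = x ∨ a = y

/-! Noetherian induction from the top: an element that is not irreducible is the greatest lower
bound of strictly larger elements (none for `⊤`, two otherwise), and by induction each of these is
the greatest lower bound of the irreducible elements above it. -/

theorem isGLB_inter_Ici_of_forall_exists_isGLB {α : Type*} [Preorder α] [WellFoundedGT α]
    {S : Set α} (hS : ∀ a ∉ S, ∃ T ⊆ Set.Ioi a, IsGLB T a) (a : α) :
    IsGLB (S ∩ Set.Ici a) a := by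
  induction a using WellFoundedGT.induction with
  | ind a ih =>
    refine ⟨fun _ hx => hx.2, fun b hb => ?_⟩
    by_cases ha : a ∈ S
    · exact hb ⟨ha, le_rfl⟩
    · obtain ⟨T, hTa, hT⟩ := hS a ha
      refine hT.2 fun t ht => (ih t (hTa ht)).2 fun x hx => ?_
      exact hb ⟨hx.1, (hTa ht).le.trans hx.2⟩

section

variable {A : Type*} [SemilatticeSup A] [OrderTop A]

theorem exists_subset_Ioi_isGLB_of_not_irrElt {a : A} (ha : ¬IrrElt a) :
    ∃ T ⊆ Set.Ioi a, IsGLB T a := by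
  by_cases htop : a = ⊤
  · exact ⟨∅, Set.empty_subset _, htop ▸ isGLB_empty⟩
  · obtain ⟨x, y, hxy, hax, hay⟩ : ∃ x y, IsGLB {x, y} a ∧ a ≠ x ∧ a ≠ y := by
      simpa [IrrElt, htop] using ha
    have hx : a < x := (hxy.1 (Set.mem_insert x {y})).lt_of_ne hax
    have hy : a < y := (hxy.1 (Set.mem_insert_of_mem x rfl)).lt_of_ne hay
    exact ⟨{x, y}, Set.pair_subset hx hy, hxy⟩

theorem eq_glb_of_irreducibles_above_general [WellFoundedGT A] (a : A) :
    IsGLB {x : A | IrrElt x ∧ a ≤ x} a :=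
  isGLB_inter_Ici_of_forall_exists_isGLB
    (fun _ hb => exists_subset_Ioi_isGLB_of_not_irrElt hb) a

end

/-- in a finite distributive nearlattice, every element is the
greatest lower bound of the irreducible elements above it. -/
theorem eq_glb_of_irreducibles_above {A : Type*} [SemilatticeSup A] [OrderTop A]
    [Finite A] (hm : HasPartialMeets A) (hd : UpsetDistrib A) :
    ∀ a : A, IsGLB {x : A | IrrElt x ∧ a ≤ x} a :=
  eq_glb_of_irreducibles_above_general
end

section
/- Let ⟨X, γ⟩ be a finite DN-structure and let N(X) = {U ∈ D(X) : γ(U) = 1}, ordered by inclusion. Then: (a) X ∈ N(X); (b) if U, V ∈ N(X) then U ∪ V ∈ N(X); (c) if U, V ∈ N(X) have a common lower bound in N(X) (some W ∈ N(X) with W ⊆ U and W ⊆ V), then U ∩ V ∈ N(X) and U ∩ V is the greatest lower bound of U and V in N(X); hence ⟨N(X), ∪, X⟩ is a distributive nearlattice; (d) the map x ↦ X \ [x) is an order isomorphism from the poset X onto ⟨Irr(N(X)), ⊆⟩, the set of meet-irreducible elements of the nearlattice N(X). -/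
/-- Given `γ : Set X → Bool`, the collection `N(X)` of downsets `U` with
`γ(U) = 1`. -/
def NSet {X : Type*} [Preorder X] (γ : Set X → Bool) : Set (Set X) :=
  {U | IsLowerSet U ∧ γ U = true}

/-- A meet-irreducible element of the nearlattice `N(X)`: a member `U ≠ X` such
that whenever `U = V ∩ W` with `V, W ∈ N(X)` having a common lower bound in
`N(X)` (so that their meet exists in `N(X)`), then `U = V` or `U = W`. -/
def IrrN {X : Type*} [Preorder X] (γ : Set X → Bool) (U : Set X) : Prop :=
  U ∈ NSet γ ∧ U ≠ Set.univ ∧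
    ∀ V W : Set X, V ∈ NSet γ → W ∈ NSet γ →
      (∃ Z ∈ NSet γ, Z ⊆ V ∧ Z ⊆ W) → U = V ∩ W → U = V ∨ U = W

/-! `(Set.Ici x)ᶜ` is the largest downset missing `x`. So a downset not contained in it contains
`x`, and two such downsets cannot meet inside `(Set.Ici x)ᶜ`: it is prime, hence irreducible.
Conversely, if `x` is minimal outside a downset `U`, then `U = (Set.Ici x)ᶜ ∩ (U ∪ Set.Iic x)`,
where the second factor is strictly larger than `U`, so an irreducible `U` equals the first. -/

section LowerSets

variable {α : Type*} [Preorder α] {s t : Set α} {a : α}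

theorem subset_compl_Ici_iff (hs : IsLowerSet s) : s ⊆ (Set.Ici a)ᶜ ↔ a ∉ s :=
  ⟨fun h ha => h ha le_rfl, fun ha _ hb hab => ha (hs hab hb)⟩

theorem inter_subset_compl_Ici_iff (hs : IsLowerSet s) (ht : IsLowerSet t) :
    s ∩ t ⊆ (Set.Ici a)ᶜ ↔ s ⊆ (Set.Ici a)ᶜ ∨ t ⊆ (Set.Ici a)ᶜ := by
  rw [subset_compl_Ici_iff (hs.inter ht), subset_compl_Ici_iff hs, subset_compl_Ici_iff ht,
    Set.mem_inter_iff, not_and_or]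

theorem compl_Ici_inter_union_Iic (hs : IsLowerSet s) (ha : Minimal (· ∉ s) a) :
    (Set.Ici a)ᶜ ∩ (s ∪ Set.Iic a) = s := by
  apply Set.Subset.antisymm
  · rintro b ⟨hab, hb | hba⟩
    · exact hb
    · by_contra hb
      exact hab (ha.le_of_le hb hba)
  · exact Set.subset_inter ((subset_compl_Ici_iff hs).2 ha.prop) Set.subset_union_left

end LowerSets

section Nearlattice

variable {X : Type*} [Preorder X] {γ : Set X → Bool} {U V W : Set X}

theorem NSet.mem_of_superset (hγ : MonotoneOn γ {U | IsLowerSet U}) (hU : U ∈ NSet γ)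
    (hV : IsLowerSet V) (hUV : U ⊆ V) : V ∈ NSet γ :=
  ⟨hV, Bool.le_iff_imp.1 (hγ hU.1 hV hUV) hU.2⟩

theorem NSet.union_mem (hγ : MonotoneOn γ {U | IsLowerSet U}) (hU : U ∈ NSet γ)
    (hV : IsLowerSet V) : U ∪ V ∈ NSet γ :=
  mem_of_superset hγ hU (hU.1.union hV) Set.subset_union_left

theorem NSet.inter_mem (hγ : MonotoneOn γ {U | IsLowerSet U}) (hU : IsLowerSet U)
    (hV : IsLowerSet V) (hW : W ∈ NSet γ) (hWU : W ⊆ U) (hWV : W ⊆ V) : U ∩ V ∈ NSet γ :=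
  mem_of_superset hγ hW (hU.inter hV) (Set.subset_inter hWU hWV)

theorem irrN_compl_Ici {x : X} (hx : γ (Set.Ici x)ᶜ = true) : IrrN γ (Set.Ici x)ᶜ := by
  refine ⟨⟨(isUpperSet_Ici x).compl, hx⟩, Set.compl_ne_univ.2 Set.nonempty_Ici, ?_⟩
  intro V W hV hW _ h
  exact ((inter_subset_compl_Ici_iff hV.1 hW.1).1 h.ge).imp
    (fun hVx => (h.le.trans Set.inter_subset_left).antisymm hVx)
    (fun hWx => (h.le.trans Set.inter_subset_right).antisymm hWx)

theorem IrrN.exists_eq_compl_Ici [WellFoundedLT X] (hγ : MonotoneOn γ {U | IsLowerSet U})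
    (hU : IrrN γ U) : ∃ x, U = (Set.Ici x)ᶜ := by
  obtain ⟨hUN, hne, hirr⟩ := hU
  obtain ⟨x, hx⟩ := exists_minimal_of_wellFoundedLT (· ∉ U) (Set.nonempty_compl.2 hne)
  have hUx : U ⊆ (Set.Ici x)ᶜ := (subset_compl_Ici_iff hUN.1).2 hx.prop
  have hxN : (Set.Ici x)ᶜ ∈ NSet γ := NSet.mem_of_superset hγ hUN (isUpperSet_Ici x).compl hUx
  have hUnion : U ∪ Set.Iic x ∈ NSet γ := NSet.union_mem hγ hUN (isLowerSet_Iic x)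
  have hne_union : U ≠ U ∪ Set.Iic x := fun h => hx.prop (h ▸ Or.inr Set.self_mem_Iic)
  exact ⟨x, (hirr _ _ hxN hUnion ⟨U, hUN, hUx, Set.subset_union_left⟩
    (compl_Ici_inter_union_Iic hUN.1 hx).symm).resolve_right hne_union⟩

end Nearlattice

theorem DN_structure_gives_nearlattice_general {X : Type*} [Preorder X] [WellFoundedLT X]
    (γ : Set X → Bool)
    (hS1 : γ Set.univ = true)
    (hS2 : ∀ x : X, γ (Set.Ici x)ᶜ = true)
    (hS3 : MonotoneOn γ {U | IsLowerSet U}) :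
    (Set.univ ∈ NSet γ) ∧
      (∀ U V : Set X, U ∈ NSet γ → V ∈ NSet γ → U ∪ V ∈ NSet γ) ∧
      (∀ U V : Set X, U ∈ NSet γ → V ∈ NSet γ →
        (∃ W ∈ NSet γ, W ⊆ U ∧ W ⊆ V) →
          (U ∩ V ∈ NSet γ ∧ U ∩ V ⊆ U ∧ U ∩ V ⊆ V ∧
            ∀ W ∈ NSet γ, W ⊆ U → W ⊆ V → W ⊆ U ∩ V)) ∧
      (∀ x : X, IrrN γ (Set.Ici x)ᶜ) ∧
      (∀ U : Set X, IrrN γ U → ∃ x : X, U = (Set.Ici x)ᶜ) ∧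
      (∀ x y : X, x ≤ y ↔ (Set.Ici x)ᶜ ⊆ (Set.Ici y)ᶜ) :=
  ⟨⟨isLowerSet_univ, hS1⟩,
    fun _ _ hU hV => NSet.union_mem hS3 hU hV.1,
    fun _ _ hU hV ⟨_, hW, hWU, hWV⟩ =>
      ⟨NSet.inter_mem hS3 hU.1 hV.1 hW hWU hWV, Set.inter_subset_left, Set.inter_subset_right,
        fun _ _ => Set.subset_inter⟩,
    fun x => irrN_compl_Ici (hS2 x),
    fun _ hU => hU.exists_eq_compl_Ici hS3,
    fun _ _ => (Set.compl_subset_compl.trans Set.Ici_subset_Ici).symm⟩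

/-- for a finite DN-structure `⟨X, γ⟩` (axioms (S1)-(S3) below),
`N(X)` contains `X`, is closed under unions, and intersections of members with a
common lower bound in `N(X)` belong to `N(X)` and are greatest lower bounds
there — hence `⟨N(X), ∪, X⟩` is a distributive nearlattice; moreover
`x ↦ X \ [x)` is an order isomorphism from `X` onto `⟨Irr(N(X)), ⊆⟩`. -/
theorem DN_structure_gives_nearlattice {X : Type*} [PartialOrder X] [Fintype X]
    (γ : Set X → Bool)
    (hS1 : γ Set.univ = true)
    (hS2 : ∀ x : X, γ (Set.Ici x)ᶜ = true)
    (hS3 : ∀ U V : Set X, IsLowerSet U → IsLowerSet V → U ⊆ V →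
      γ U = true → γ V = true) :
    (Set.univ ∈ NSet γ) ∧
      (∀ U V : Set X, U ∈ NSet γ → V ∈ NSet γ → U ∪ V ∈ NSet γ) ∧
      (∀ U V : Set X, U ∈ NSet γ → V ∈ NSet γ →
        (∃ W ∈ NSet γ, W ⊆ U ∧ W ⊆ V) →
          (U ∩ V ∈ NSet γ ∧ U ∩ V ⊆ U ∧ U ∩ V ⊆ V ∧
            ∀ W ∈ NSet γ, W ⊆ U → W ⊆ V → W ⊆ U ∩ V)) ∧
      (∀ x : X, IrrN γ (Set.Ici x)ᶜ) ∧
      (∀ U : Set X, IrrN γ U → ∃ x : X, U = (Set.Ici x)ᶜ) ∧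
      (∀ x y : X, x ≤ y ↔ (Set.Ici x)ᶜ ⊆ (Set.Ici y)ᶜ) :=
  DN_structure_gives_nearlattice_general γ hS1 hS2 fun U hU V hV hUV =>
    Bool.le_iff_imp.2 (hS3 U V hU hV hUV)
end
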